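/- Let r ≥ 2, Δ_max > 0, L > 0 and m ≥ 0, and set C₁ = rL + (r−1)2^{r−2} + c_r^{(1)}, C₂ = 2^{r−1} L^r c^{(2)}_{r,Δ_max} m, C₃ = C₂ + 2^{r−2} L^r (1 + rΔ_max^{r−1})(1 + c_r^{(1)} Δ_max). Then for every Δ ∈ (0, Δ_max), every t, every b, σ satisfying |b(t,x)| + ‖σ(t,x)‖ ≤ L(1+|x|) (operator norm for σ), every ℝ^q-valued random vector Z with E[Z] = 0 and E|Z|^r ≤ m, and every x ∈ ℝ^d: E| x + Δ b(t,x) + √Δ σ(t,x) Z |^r ≤ e^{Δ(C₁+C₂)} |x|^r + Δ C₃. -/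

import Mathlib

open MeasureTheory Real

noncomputable section

abbrev Euc (d : ℕ) : Type := EuclideanSpace ℝ (Fin d)

def c₁ (r : ℝ) : ℝ := 2 ^ (max (r - 3) 0) * ((r - 1) * (r - 2) / 2)

def c₂ (r h₀ : ℝ) : ℝ := 2 ^ (max (r - 3) 0) * (r - 1) * (1 + r / 2 * h₀ ^ (r / 2 - 1))

/-!
Write `a = x + Δ b(t, x)` and `A = σ(t, x)`. The map `y ↦ ‖y‖ ^ (r - 2) • y` is Lipschitz on
balls, so `s ↦ ‖a + s • u‖ ^ r` has a first order Taylor expansion with an explicit remainder of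
order `‖a‖ ^ (r - 2) * ‖u‖ ^ 2 + ‖u‖ ^ r`. For `u = √Δ • A Z` the linear term has mean zero, and
Young's inequality turns the remainder into `Δ c₁ ‖a‖ ^ r + Δ c₂ ‖A Z‖ ^ r`: the noise costs only
`O(Δ)`. Linear growth bounds `‖A‖ ^ r` and the drift power `‖a‖ ^ r` by affine functions of
`‖x‖ ^ r`, and `1 + u ≤ exp u` absorbs the factors multiplying `‖x‖ ^ r` into one exponential.
-/

/-- The constant `C₁` of the one-step bound: the exponential growth rate of the `r`-th moment
that is already present without noise moments. -/
def C₁ (r L : ℝ) : ℝ := r * L + (r - 1) * 2 ^ (r - 2) + c₁ r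

/-- The constant `C₂` of the one-step bound: the contribution of noise whose `r`-th moment is at
most `m`, for step sizes up to `h₀`. -/
def C₂ (r L h₀ m : ℝ) : ℝ := 2 ^ (r - 1) * L ^ r * c₂ r h₀ * m

/-- The constant `C₃` of the one-step bound: the additive error per unit of time. -/
def C₃ (r L h₀ m : ℝ) : ℝ :=
  C₂ r L h₀ m + 2 ^ (r - 2) * L ^ r * (1 + r * h₀ ^ (r - 1)) * (1 + c₁ r * h₀)

theorem c₁_nonneg {r : ℝ} (hr : 2 ≤ r) : 0 ≤ c₁ r := by
  have hfactors : 0 ≤ (r - 1) * (r - 2) := mul_nonneg (by linarith) (by linarith)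
  exact mul_nonneg (by positivity) (div_nonneg hfactors zero_le_two)

theorem c₂_nonneg {r h₀ : ℝ} (hr : 1 ≤ r) (hh₀ : 0 ≤ h₀) : 0 ≤ c₂ r h₀ := by
  have : 0 ≤ r - 1 := sub_nonneg.2 hr
  rw [c₂]
  positivity

theorem C₂_nonneg {r L h₀ m : ℝ} (hr : 1 ≤ r) (hL : 0 ≤ L) (hh₀ : 0 ≤ h₀) (hm : 0 ≤ m) :
    0 ≤ C₂ r L h₀ m :=
  mul_nonneg (mul_nonneg (by positivity) (c₂_nonneg hr hh₀)) hm

section RealPowers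

theorem add_mul_rpow_mul_rpow_le {s t a b : ℝ} (hs : 0 ≤ s) (ht : 0 ≤ t) (ha : 0 ≤ a)
    (hb : 0 ≤ b) : (s + t) * (a ^ s * b ^ t) ≤ s * a ^ (s + t) + t * b ^ (s + t) := by
  rcases (add_nonneg hs ht).eq_or_lt with hst | hst
  · obtain ⟨rfl, rfl⟩ := (add_eq_zero_iff_of_nonneg hs ht).1 hst.symm
    simp
  have weighted_amgm := Real.geom_mean_le_arith_mean2_weighted (w₁ := s / (s + t))
    (w₂ := t / (s + t)) (p₁ := a ^ (s + t)) (p₂ := b ^ (s + t)) (by positivity) (by positivity)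
    (by positivity) (by positivity) (by field_simp)
  rw [← Real.rpow_mul ha, ← Real.rpow_mul hb, mul_div_cancel₀ _ hst.ne',
    mul_div_cancel₀ _ hst.ne'] at weighted_amgm
  calc (s + t) * (a ^ s * b ^ t)
      ≤ (s + t) * (s / (s + t) * a ^ (s + t) + t / (s + t) * b ^ (s + t)) := by gcongr
    _ = s * a ^ (s + t) + t * b ^ (s + t) := by field_simp

theorem rpow_sub_rpow_le_mul_sub {r a b : ℝ} (hr : 1 ≤ r) (ha : 0 ≤ a) (hb : 0 ≤ b) :
    b ^ r - a ^ r ≤ r * b ^ (r - 1) * (b - a) := by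
  have young := add_mul_rpow_mul_rpow_le (sub_nonneg.2 hr) zero_le_one hb ha
  have hpow : b ^ r = b ^ (r - 1) * b := by
    rw [← Real.rpow_add_one' hb (by linarith), sub_add_cancel]
  rw [sub_add_cancel, Real.rpow_one] at young
  linear_combination young + r * hpow

theorem add_rpow_le_two_rpow_mul {p a b : ℝ} (hp : 0 ≤ p) (ha : 0 ≤ a) (hb : 0 ≤ b) :
    (a + b) ^ p ≤ 2 ^ max (p - 1) 0 * (a ^ p + b ^ p) := by
  rcases le_total p 1 with h | h
  · rw [max_eq_right (by linarith), Real.rpow_zero, one_mul]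
    exact Real.rpow_add_le_add_rpow ha hb hp h
  · rw [max_eq_left (by linarith)]
    lift a to NNReal using ha
    lift b to NNReal using hb
    exact_mod_cast NNReal.rpow_add_le_mul_rpow_add_rpow a b h

theorem rpow_le_of_linear_growth {r L c ξ : ℝ} (hr : 1 ≤ r) (hL : 0 ≤ L) (hc : 0 ≤ c)
    (hξ : 0 ≤ ξ) (hgrowth : c ≤ L * (1 + ξ)) : c ^ r ≤ 2 ^ (r - 1) * L ^ r * (1 + ξ ^ r) := by
  have hadd := add_rpow_le_two_rpow_mul (zero_le_one.trans hr) zero_le_one hξ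
  rw [max_eq_left (sub_nonneg.2 hr), Real.one_rpow] at hadd
  calc c ^ r ≤ (L * (1 + ξ)) ^ r := by gcongr
    _ = L ^ r * (1 + ξ) ^ r := Real.mul_rpow hL (by positivity)
    _ ≤ L ^ r * (2 ^ (r - 1) * (1 + ξ ^ r)) := by gcongr
    _ = 2 ^ (r - 1) * L ^ r * (1 + ξ ^ r) := by ring

theorem add_mul_rpow_le {r a b h : ℝ} (hr : 2 ≤ r) (ha : 0 ≤ a) (hb : 0 ≤ b) (hh : 0 ≤ h) :
    (a + h * b) ^ r ≤ (1 + h * ((r - 1) * 2 ^ (r - 2))) * a ^ r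
      + h * (2 ^ (r - 2) * b ^ r * (1 + r * h ^ (r - 1))) := by
  have hr1 : 0 ≤ r - 1 := by linarith
  have tangent := rpow_sub_rpow_le_mul_sub (r := r) (by linarith) ha
    (show 0 ≤ a + h * b by positivity)
  have hadd := add_rpow_le_two_rpow_mul hr1 ha (mul_nonneg hh hb)
  rw [max_eq_left (by linarith), sub_sub, one_add_one_eq_two] at hadd
  have young := add_mul_rpow_mul_rpow_le hr1 zero_le_one ha hb
  rw [sub_add_cancel, Real.rpow_one] at young
  have hpow : b * (h * b) ^ (r - 1) = h ^ (r - 1) * b ^ r := by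
    rw [Real.mul_rpow hh hb, mul_left_comm, mul_comm b, ← Real.rpow_add_one' hb (by linarith),
      sub_add_cancel]
  calc (a + h * b) ^ r ≤ a ^ r + r * (h * b) * (a + h * b) ^ (r - 1) := by linarith
    _ ≤ a ^ r + r * (h * b) * (2 ^ (r - 2) * (a ^ (r - 1) + (h * b) ^ (r - 1))) := by gcongr
    _ = a ^ r + h * 2 ^ (r - 2) * (r * (a ^ (r - 1) * b) + r * (b * (h * b) ^ (r - 1))) := by ring
    _ ≤ a ^ r + h * 2 ^ (r - 2) * ((r - 1) * a ^ r + 1 * b ^ r + r * (h ^ (r - 1) * b ^ r)) := by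
      rw [hpow]
      gcongr
    _ = _ := by ring

end RealPowers

section ExponentialBounds

theorem one_add_rpow_le_exp_mul {u r : ℝ} (hu : -1 ≤ u) (hr : 0 ≤ r) :
    (1 + u) ^ r ≤ exp (r * u) := by
  calc (1 + u) ^ r ≤ exp u ^ r :=
        Real.rpow_le_rpow (by linarith) (add_comm u 1 ▸ Real.add_one_le_exp u) hr
    _ = exp (r * u) := by rw [← Real.exp_mul, mul_comm]

theorem exp_mul_one_add_le (u v : ℝ) : exp u * (1 + v) ≤ exp (u + v) := by
  rw [Real.exp_add, add_comm 1 v]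
  gcongr
  exact Real.add_one_le_exp v

theorem exp_mul_one_add_add_le {u v w : ℝ} (huv : 0 ≤ u + v) (hw : 0 ≤ w) :
    exp u * (1 + v) + w ≤ exp (u + v + w) :=
  calc exp u * (1 + v) + w ≤ exp (u + v) + exp (u + v) * w :=
        add_le_add (exp_mul_one_add_le u v) (le_mul_of_one_le_left hw (Real.one_le_exp huv))
    _ = exp (u + v) * (1 + w) := by ring
    _ ≤ exp (u + v + w) := exp_mul_one_add_le (u + v) w

end ExponentialBounds

section NormedSpace

variable {E : Type*} [NormedAddCommGroup E] [NormedSpace ℝ E]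

theorem norm_rpow_smul_sub_le_of_norm_le {p : ℝ} (hp : 0 ≤ p) {x y : E} (hxy : ‖x‖ ≤ ‖y‖) :
    ‖‖y‖ ^ p • y - ‖x‖ ^ p • x‖ ≤ (p + 1) * ‖y‖ ^ p * ‖y - x‖ := by
  have hpow_le : ‖x‖ ^ p ≤ ‖y‖ ^ p := by gcongr
  have hscalar : (‖y‖ ^ p - ‖x‖ ^ p) * ‖x‖ ≤ p * ‖y‖ ^ p * (‖y‖ - ‖x‖) := by
    have tangent := rpow_sub_rpow_le_mul_sub (r := p + 1) (by linarith) (norm_nonneg x)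
      (norm_nonneg y)
    rw [Real.rpow_add_one' (norm_nonneg _) (by linarith),
      Real.rpow_add_one' (norm_nonneg _) (by linarith), add_sub_cancel_right] at tangent
    linarith
  calc ‖‖y‖ ^ p • y - ‖x‖ ^ p • x‖
      = ‖‖y‖ ^ p • (y - x) + (‖y‖ ^ p - ‖x‖ ^ p) • x‖ := by congr 1; module
    _ ≤ ‖‖y‖ ^ p • (y - x)‖ + ‖(‖y‖ ^ p - ‖x‖ ^ p) • x‖ := norm_add_le _ _
    _ = ‖y‖ ^ p * ‖y - x‖ + (‖y‖ ^ p - ‖x‖ ^ p) * ‖x‖ := by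
      rw [norm_smul, norm_smul, Real.norm_of_nonneg (by positivity),
        Real.norm_of_nonneg (sub_nonneg.2 hpow_le)]
    _ ≤ ‖y‖ ^ p * ‖y - x‖ + p * ‖y‖ ^ p * ‖y - x‖ := by
      refine add_le_add_right (hscalar.trans ?_) _
      gcongr
      exact norm_sub_norm_le y x
    _ = (p + 1) * ‖y‖ ^ p * ‖y - x‖ := by ring

theorem norm_rpow_smul_sub_le {p M : ℝ} (hp : 0 ≤ p) {x y : E} (hx : ‖x‖ ≤ M) (hy : ‖y‖ ≤ M) :
    ‖‖y‖ ^ p • y - ‖x‖ ^ p • x‖ ≤ (p + 1) * M ^ p * ‖y - x‖ := by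
  rcases le_total ‖x‖ ‖y‖ with h | h
  · refine (norm_rpow_smul_sub_le_of_norm_le hp h).trans ?_
    gcongr
  · rw [norm_sub_rev, norm_sub_rev y x]
    refine (norm_rpow_smul_sub_le_of_norm_le hp h).trans ?_
    gcongr

theorem norm_add_smul_rpow_le_of_linear_growth {r h L : ℝ} (hr : 2 ≤ r) (hh : 0 ≤ h)
    (hL : 0 ≤ L) {x v : E} (hv : ‖v‖ ≤ L * (1 + ‖x‖)) :
    ‖x + h • v‖ ^ r ≤ exp (h * (r * L + (r - 1) * 2 ^ (r - 2))) * ‖x‖ ^ r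
      + h * (2 ^ (r - 2) * L ^ r * (1 + r * h ^ (r - 1))) := by
  have hnorm : ‖x + h • v‖ ≤ (1 + h * L) * ‖x‖ + h * L := by
    calc ‖x + h • v‖ ≤ ‖x‖ + h * ‖v‖ := by
          simpa only [norm_smul, Real.norm_of_nonneg hh] using norm_add_le x (h • v)
      _ ≤ ‖x‖ + h * (L * (1 + ‖x‖)) := by gcongr
      _ = (1 + h * L) * ‖x‖ + h * L := by ring
  have hfactor : (1 + h * ((r - 1) * 2 ^ (r - 2))) * (1 + h * L) ^ r
      ≤ exp (h * (r * L + (r - 1) * 2 ^ (r - 2))) := by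
    have hr1 : 0 ≤ r - 1 := by linarith
    have hhL : 0 ≤ h * L := by positivity
    calc (1 + h * ((r - 1) * 2 ^ (r - 2))) * (1 + h * L) ^ r
        ≤ (1 + h * ((r - 1) * 2 ^ (r - 2))) * exp (r * (h * L)) := by
          gcongr
          exact one_add_rpow_le_exp_mul (by linarith) (by linarith)
      _ ≤ exp (r * (h * L) + h * ((r - 1) * 2 ^ (r - 2))) := by
          rw [mul_comm]
          exact exp_mul_one_add_le _ _
      _ = exp (h * (r * L + (r - 1) * 2 ^ (r - 2))) := by ring_nf
  calc ‖x + h • v‖ ^ r ≤ ((1 + h * L) * ‖x‖ + h * L) ^ r := by gcongr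
    _ ≤ (1 + h * ((r - 1) * 2 ^ (r - 2))) * ((1 + h * L) * ‖x‖) ^ r
        + h * (2 ^ (r - 2) * L ^ r * (1 + r * h ^ (r - 1))) :=
      add_mul_rpow_le hr (by positivity) hL hh
    _ = (1 + h * ((r - 1) * 2 ^ (r - 2))) * (1 + h * L) ^ r * ‖x‖ ^ r
        + h * (2 ^ (r - 2) * L ^ r * (1 + r * h ^ (r - 1))) := by
      rw [Real.mul_rpow (by positivity) (norm_nonneg x)]
      ring
    _ ≤ _ := by gcongr

end NormedSpace

section InnerProductSpace

variable {E : Type*} [NormedAddCommGroup E] [InnerProductSpace ℝ E]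

theorem hasDerivAt_norm_add_smul_rpow {r : ℝ} (hr : 1 < r) (a u : E) (s : ℝ) :
    HasDerivAt (fun s : ℝ => ‖a + s • u‖ ^ r)
      (r * (‖a + s • u‖ ^ (r - 2) * inner ℝ (a + s • u) u)) s := by
  have hline : HasDerivAt (fun s : ℝ => a + s • u) u s := by
    simpa only [id, one_smul] using ((hasDerivAt_id s).smul_const u).const_add a
  refine ((hasFDerivAt_norm_rpow (a + s • u) hr).comp_hasDerivAt s hline).congr_deriv ?_
  simp only [smul_apply, innerSL_apply_apply, smul_eq_mul, mul_assoc]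

theorem norm_rpow_mul_inner_sub_le {p s : ℝ} (hp : 0 ≤ p) (hs : 0 ≤ s) (a u : E) :
    ‖a + s • u‖ ^ p * inner ℝ (a + s • u) u - ‖a‖ ^ p * inner ℝ a u
      ≤ (p + 1) * 2 ^ max (p - 1) 0
        * (‖a‖ ^ p * ‖u‖ ^ 2 * s + ‖u‖ ^ (p + 2) * s ^ (p + 1)) := by
  have hsu : ‖s • u‖ = s * ‖u‖ := by rw [norm_smul, Real.norm_of_nonneg hs]
  have hlip : ‖‖a + s • u‖ ^ p • (a + s • u) - ‖a‖ ^ p • a‖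
      ≤ (p + 1) * (‖a‖ + s * ‖u‖) ^ p * (s * ‖u‖) := by
    simpa only [add_sub_cancel_left, hsu] using norm_rpow_smul_sub_le hp
      (show ‖a‖ ≤ ‖a‖ + s * ‖u‖ from le_add_of_nonneg_right (by positivity))
      ((norm_add_le a (s • u)).trans_eq (by rw [hsu]))
  have hpow : (s * ‖u‖) ^ p * (s * ‖u‖ ^ 2) = ‖u‖ ^ (p + 2) * s ^ (p + 1) := by
    rw [Real.mul_rpow hs (norm_nonneg u), Real.rpow_add_one' hs (by linarith),
      Real.rpow_add_of_nonneg (norm_nonneg u) hp zero_le_two, Real.rpow_two]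
    ring
  calc ‖a + s • u‖ ^ p * inner ℝ (a + s • u) u - ‖a‖ ^ p * inner ℝ a u
      = inner ℝ (‖a + s • u‖ ^ p • (a + s • u) - ‖a‖ ^ p • a) u := by
        rw [inner_sub_left, real_inner_smul_left, real_inner_smul_left]
    _ ≤ ‖‖a + s • u‖ ^ p • (a + s • u) - ‖a‖ ^ p • a‖ * ‖u‖ := real_inner_le_norm _ _
    _ ≤ (p + 1) * (‖a‖ + s * ‖u‖) ^ p * (s * ‖u‖) * ‖u‖ := by gcongr
    _ ≤ (p + 1) * (2 ^ max (p - 1) 0 * (‖a‖ ^ p + (s * ‖u‖) ^ p)) * (s * ‖u‖) * ‖u‖ := by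
        gcongr
        exact add_rpow_le_two_rpow_mul hp (norm_nonneg a) (by positivity)
    _ = (p + 1) * 2 ^ max (p - 1) 0
        * (‖a‖ ^ p * ‖u‖ ^ 2 * s + (s * ‖u‖) ^ p * (s * ‖u‖ ^ 2)) := by ring
    _ = _ := by rw [hpow]

theorem norm_add_rpow_le {r : ℝ} (hr : 2 ≤ r) (a u : E) :
    ‖a + u‖ ^ r ≤ ‖a‖ ^ r + r * ‖a‖ ^ (r - 2) * inner ℝ a u
      + 2 ^ max (r - 3) 0 * (r - 1) * (r / 2 * (‖a‖ ^ (r - 2) * ‖u‖ ^ 2) + ‖u‖ ^ r) := by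
  set K : ℝ := 2 ^ max (r - 3) 0 with hK
  let B (s : ℝ) : ℝ := ‖a‖ ^ r + r * (‖a‖ ^ (r - 2) * inner ℝ a u) * s
    + K * (r - 1) * (r / 2 * (‖a‖ ^ (r - 2) * ‖u‖ ^ 2) * s ^ 2 + ‖u‖ ^ r * s ^ r)
  have hB (s : ℝ) : HasDerivAt B (r * (‖a‖ ^ (r - 2) * inner ℝ a u)
      + r * ((r - 1) * K * (‖a‖ ^ (r - 2) * ‖u‖ ^ 2 * s + ‖u‖ ^ r * s ^ (r - 1)))) s := by
    have hlin := (hasDerivAt_id s).const_mul (r * (‖a‖ ^ (r - 2) * inner ℝ a u))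
    have hsq := (hasDerivAt_pow 2 s).const_mul (r / 2 * (‖a‖ ^ (r - 2) * ‖u‖ ^ 2))
    have hpow := (Real.hasDerivAt_rpow_const (x := s) (p := r)
      (Or.inr (by linarith))).const_mul (‖u‖ ^ r)
    refine ((hlin.const_add (‖a‖ ^ r)).add ((hsq.add hpow).const_mul (K * (r - 1)))).congr_deriv ?_
    simp only [mul_one, Nat.cast_ofNat, Nat.add_one_sub_one, pow_one]
    ring
  have hderiv_le (s : ℝ) (hs : s ∈ Set.Ico 0 1) :
      r * (‖a + s • u‖ ^ (r - 2) * inner ℝ (a + s • u) u)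
        ≤ r * (‖a‖ ^ (r - 2) * inner ℝ a u)
          + r * ((r - 1) * K * (‖a‖ ^ (r - 2) * ‖u‖ ^ 2 * s + ‖u‖ ^ r * s ^ (r - 1))) := by
    have h := norm_rpow_mul_inner_sub_le (sub_nonneg.2 hr) hs.1 a u
    rw [sub_add_cancel, show r - 2 + 1 = r - 1 by ring, show r - 2 - 1 = r - 3 by ring, ← hK] at h
    rw [← mul_add]
    exact mul_le_mul_of_nonneg_left (sub_le_iff_le_add'.1 h) (by linarith)
  have hf (s : ℝ) := hasDerivAt_norm_add_smul_rpow (r := r) (by linarith) a u s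
  have hle_one : ‖a + (1 : ℝ) • u‖ ^ r ≤ B 1 := image_le_of_deriv_right_le_deriv_boundary
    (fun s _ => (hf s).continuousAt.continuousWithinAt) (fun s _ => (hf s).hasDerivWithinAt)
    (by simp [B, Real.zero_rpow (show r ≠ 0 by linarith)])
    (fun s _ => (hB s).continuousAt.continuousWithinAt) (fun s _ => (hB s).hasDerivWithinAt)
    hderiv_le (Set.right_mem_Icc.2 zero_le_one)
  simpa [B, mul_assoc] using hle_one

theorem norm_sqrt_smul_rpow {r h : ℝ} (hr : r ≠ 0) (hh : 0 ≤ h) (w : E) :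
    ‖√h • w‖ ^ r = h * h ^ (r / 2 - 1) * ‖w‖ ^ r := by
  rw [norm_smul, Real.mul_rpow (norm_nonneg _) (norm_nonneg _),
    Real.norm_of_nonneg (Real.sqrt_nonneg h), Real.sqrt_eq_rpow, ← Real.rpow_mul hh, mul_comm h,
    ← Real.rpow_add_one' hh (by simpa using hr)]
  ring_nf

theorem norm_add_sqrt_smul_rpow_le {r h h₀ : ℝ} (hr : 2 ≤ r) (hh : 0 ≤ h) (hh₀ : h ≤ h₀)
    (a w : E) :
    ‖a + √h • w‖ ^ r ≤ (1 + h * c₁ r) * ‖a‖ ^ r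
      + r * ‖a‖ ^ (r - 2) * √h * inner ℝ a w + h * c₂ r h₀ * ‖w‖ ^ r := by
  have hr1 : 0 ≤ r - 1 := by linarith
  have hsq : ‖√h • w‖ ^ 2 = h * ‖w‖ ^ 2 := by
    rw [norm_smul, mul_pow, Real.norm_of_nonneg (Real.sqrt_nonneg h), Real.sq_sqrt hh]
  have taylor := norm_add_rpow_le hr a (√h • w)
  rw [hsq, norm_sqrt_smul_rpow (by linarith) hh, real_inner_smul_right] at taylor
  have young : r * (‖a‖ ^ (r - 2) * ‖w‖ ^ 2) ≤ (r - 2) * ‖a‖ ^ r + 2 * ‖w‖ ^ r := by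
    simpa only [sub_add_cancel, Real.rpow_two] using
      add_mul_rpow_mul_rpow_le (sub_nonneg.2 hr) zero_le_two (norm_nonneg a) (norm_nonneg w)
  have hremainder : r / 2 * (‖a‖ ^ (r - 2) * (h * ‖w‖ ^ 2)) + h * h ^ (r / 2 - 1) * ‖w‖ ^ r
      ≤ h * ((r - 2) / 2 * ‖a‖ ^ r + (1 + r / 2 * h₀ ^ (r / 2 - 1)) * ‖w‖ ^ r) := by
    have hpow : h ^ (r / 2 - 1) ≤ r / 2 * h₀ ^ (r / 2 - 1) := by
      calc h ^ (r / 2 - 1) ≤ h₀ ^ (r / 2 - 1) := Real.rpow_le_rpow hh hh₀ (by linarith)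
        _ ≤ r / 2 * h₀ ^ (r / 2 - 1) :=
          le_mul_of_one_le_left (Real.rpow_nonneg (hh.trans hh₀) _) (by linarith)
    calc r / 2 * (‖a‖ ^ (r - 2) * (h * ‖w‖ ^ 2)) + h * h ^ (r / 2 - 1) * ‖w‖ ^ r
        = h * (r * (‖a‖ ^ (r - 2) * ‖w‖ ^ 2) / 2 + h ^ (r / 2 - 1) * ‖w‖ ^ r) := by ring
      _ ≤ h * (((r - 2) * ‖a‖ ^ r + 2 * ‖w‖ ^ r) / 2
          + r / 2 * h₀ ^ (r / 2 - 1) * ‖w‖ ^ r) := by gcongr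
      _ = _ := by ring
  calc ‖a + √h • w‖ ^ r ≤ _ := taylor
    _ ≤ ‖a‖ ^ r + r * ‖a‖ ^ (r - 2) * (√h * inner ℝ a w) + 2 ^ max (r - 3) 0 * (r - 1)
        * (h * ((r - 2) / 2 * ‖a‖ ^ r + (1 + r / 2 * h₀ ^ (r / 2 - 1)) * ‖w‖ ^ r)) := by gcongr
    _ = _ := by rw [c₁, c₂]; ring

end InnerProductSpace

section Moments

variable {E : Type*} [NormedAddCommGroup E] [InnerProductSpace ℝ E]
  {Ω : Type*} [MeasurableSpace Ω] {P : Measure Ω} [IsProbabilityMeasure P]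

theorem integral_norm_add_sqrt_smul_rpow_le {r h h₀ : ℝ} (hr : 2 ≤ r) (hh : 0 ≤ h)
    (hh₀ : h ≤ h₀) (a : E) {W : Ω → E} (hW : Integrable W P)
    (hWr : Integrable (fun ω => ‖W ω‖ ^ r) P) (hmean : ∫ ω, inner ℝ a (W ω) ∂P = 0) :
    ∫ ω, ‖a + √h • W ω‖ ^ r ∂P
      ≤ (1 + h * c₁ r) * ‖a‖ ^ r + h * c₂ r h₀ * ∫ ω, ‖W ω‖ ^ r ∂P := by
  have hlinear : Integrable (fun ω => r * ‖a‖ ^ (r - 2) * √h * inner ℝ a (W ω)) P :=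
    (hW.const_inner a).const_mul _
  have haffine : Integrable
      (fun ω => (1 + h * c₁ r) * ‖a‖ ^ r + r * ‖a‖ ^ (r - 2) * √h * inner ℝ a (W ω)) P :=
    (integrable_const _).add hlinear
  have hpower : Integrable (fun ω => h * c₂ r h₀ * ‖W ω‖ ^ r) P := hWr.const_mul _
  calc ∫ ω, ‖a + √h • W ω‖ ^ r ∂P
      ≤ ∫ ω, ((1 + h * c₁ r) * ‖a‖ ^ r + r * ‖a‖ ^ (r - 2) * √h * inner ℝ a (W ω)
          + h * c₂ r h₀ * ‖W ω‖ ^ r) ∂P :=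
        integral_mono_of_nonneg (.of_forall fun ω => by positivity) (haffine.add hpower)
          (.of_forall fun ω => norm_add_sqrt_smul_rpow_le hr hh hh₀ a (W ω))
    _ = (1 + h * c₁ r) * ‖a‖ ^ r + h * c₂ r h₀ * ∫ ω, ‖W ω‖ ^ r ∂P := by
        rw [integral_add haffine hpower, integral_add (integrable_const _) hlinear,
          integral_const, probReal_univ, one_smul, integral_const_mul, integral_const_mul,
          hmean, mul_zero, add_zero]

variable {F : Type*} [NormedAddCommGroup F] [NormedSpace ℝ F] [CompleteSpace F]

theorem integral_norm_add_sqrt_smul_clm_rpow_le {r h h₀ m : ℝ} (hr : 2 ≤ r) (hh : 0 ≤ h)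
    (hh₀ : h ≤ h₀) (a : E) (A : F →L[ℝ] E) {Z : Ω → F} (hZ : Integrable Z P)
    (hmean : ∫ ω, Z ω ∂P = 0) (hZr : Integrable (fun ω => ‖Z ω‖ ^ r) P)
    (hm : ∫ ω, ‖Z ω‖ ^ r ∂P ≤ m) :
    ∫ ω, ‖a + √h • A (Z ω)‖ ^ r ∂P
      ≤ (1 + h * c₁ r) * ‖a‖ ^ r + h * c₂ r h₀ * (‖A‖ ^ r * m) := by
  have hAZ : Integrable (fun ω => A (Z ω)) P := A.integrable_comp hZ
  have hAZ_mean : ∫ ω, inner ℝ a (A (Z ω)) ∂P = 0 := by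
    simpa [hmean] using (innerSL ℝ a ∘L A).integral_comp_comm hZ
  have hAZ_le (ω : Ω) : ‖A (Z ω)‖ ^ r ≤ ‖A‖ ^ r * ‖Z ω‖ ^ r := by
    rw [← Real.mul_rpow (norm_nonneg _) (norm_nonneg _)]
    gcongr
    exact A.le_opNorm _
  have hAZr : Integrable (fun ω => ‖A (Z ω)‖ ^ r) P :=
    (hZr.const_mul (‖A‖ ^ r)).mono'
      (hAZ.aestronglyMeasurable.norm.aemeasurable.pow_const r).aestronglyMeasurable
      (.of_forall fun ω => by
        rw [Real.norm_of_nonneg (Real.rpow_nonneg (norm_nonneg _) r)]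
        exact hAZ_le ω)
  have hc₂ := c₂_nonneg (r := r) (by linarith) (hh.trans hh₀)
  refine (integral_norm_add_sqrt_smul_rpow_le hr hh hh₀ a hAZ hAZr hAZ_mean).trans ?_
  gcongr
  calc ∫ ω, ‖A (Z ω)‖ ^ r ∂P ≤ ∫ ω, ‖A‖ ^ r * ‖Z ω‖ ^ r ∂P :=
        integral_mono hAZr (hZr.const_mul _) hAZ_le
    _ = ‖A‖ ^ r * ∫ ω, ‖Z ω‖ ^ r ∂P := integral_const_mul _ _
    _ ≤ ‖A‖ ^ r * m := by gcongr

theorem euler_one_step_moment_bound_general {r h h₀ L m : ℝ} (hr : 2 ≤ r) (hh : 0 ≤ h)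
    (hh₀ : h ≤ h₀) {x v : E} {A : F →L[ℝ] E} (hv : ‖v‖ ≤ L * (1 + ‖x‖))
    (hA : ‖A‖ ≤ L * (1 + ‖x‖)) {Z : Ω → F} (hZ : Integrable Z P) (hmean : ∫ ω, Z ω ∂P = 0)
    (hZr : Integrable (fun ω => ‖Z ω‖ ^ r) P) (hm : ∫ ω, ‖Z ω‖ ^ r ∂P ≤ m) :
    ∫ ω, ‖x + h • v + √h • A (Z ω)‖ ^ r ∂P
      ≤ exp (h * (C₁ r L + C₂ r L h₀ m)) * ‖x‖ ^ r + h * C₃ r L h₀ m := by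
  have hr1 : 0 ≤ r - 1 := by linarith
  have hh₀_nonneg : 0 ≤ h₀ := hh.trans hh₀
  have hL : 0 ≤ L := nonneg_of_mul_nonneg_left ((norm_nonneg v).trans hv) (by positivity)
  have hm_nonneg : 0 ≤ m := le_trans (integral_nonneg fun ω => by positivity) hm
  have hc₁ := c₁_nonneg hr
  have hc₂ := c₂_nonneg (r := r) (by linarith) hh₀_nonneg
  have hC₂ := C₂_nonneg (r := r) (by linarith) hL hh₀_nonneg hm_nonneg
  set C₀ : ℝ := r * L + (r - 1) * 2 ^ (r - 2) with hC₀
  set D : ℝ := 2 ^ (r - 2) * L ^ r * (1 + r * h₀ ^ (r - 1)) with hD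
  have hdrift : ‖x + h • v‖ ^ r ≤ exp (h * C₀) * ‖x‖ ^ r + h * D := by
    refine (norm_add_smul_rpow_le_of_linear_growth hr hh hL hv).trans ?_
    rw [hD]
    gcongr
  have hnoise : ‖A‖ ^ r ≤ 2 ^ (r - 1) * L ^ r * (1 + ‖x‖ ^ r) :=
    rpow_le_of_linear_growth (by linarith) hL (norm_nonneg A) (norm_nonneg x) hA
  have hrate : exp (h * C₀) * (1 + h * c₁ r) + h * C₂ r L h₀ m
      ≤ exp (h * (C₁ r L + C₂ r L h₀ m)) := by
    refine (exp_mul_one_add_add_le (by positivity) (by positivity)).trans_eq ?_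
    rw [C₁, hC₀]
    ring_nf
  calc ∫ ω, ‖x + h • v + √h • A (Z ω)‖ ^ r ∂P
      ≤ (1 + h * c₁ r) * ‖x + h • v‖ ^ r + h * c₂ r h₀ * (‖A‖ ^ r * m) :=
        integral_norm_add_sqrt_smul_clm_rpow_le hr hh hh₀ _ A hZ hmean hZr hm
    _ ≤ (1 + h * c₁ r) * (exp (h * C₀) * ‖x‖ ^ r + h * D)
        + h * c₂ r h₀ * (2 ^ (r - 1) * L ^ r * (1 + ‖x‖ ^ r) * m) := by gcongr
    _ = (exp (h * C₀) * (1 + h * c₁ r) + h * C₂ r L h₀ m) * ‖x‖ ^ r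
        + h * (C₂ r L h₀ m + D * (1 + c₁ r * h)) := by rw [C₂]; ring
    _ ≤ exp (h * (C₁ r L + C₂ r L h₀ m)) * ‖x‖ ^ r
        + h * (C₂ r L h₀ m + D * (1 + c₁ r * h₀)) := by gcongr

end Moments

/-- One-step `r`-th moment bound for the Euler operator:  for `r ≥ 2`, `Δ ∈ (0, Δ_max)`,
coefficients `b, σ` with linear growth `|b(t,x)| + ‖σ(t,x)‖ ≤ L(1+|x|)` (operator norm),
and any centered `Z` with `E|Z|^r ≤ m`:
`E|x + Δ b(t,x) + √Δ σ(t,x) Z|^r ≤ e^{Δ(C₁+C₂)}|x|^r + Δ C₃`. -/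
theorem euler_one_step_moment_bound (d q : ℕ) (r Δmax L m : ℝ) (hr : 2 ≤ r)
    (hΔmax : 0 < Δmax) (hL : 0 < L) (hm : 0 ≤ m) :
    ∀ Δ ∈ Set.Ioo (0 : ℝ) Δmax, ∀ t : ℝ,
    ∀ (b : ℝ → Euc d → Euc d) (σ : ℝ → Euc d → (Euc q →L[ℝ] Euc d)),
      (∀ s x, ‖b s x‖ + ‖σ s x‖ ≤ L * (1 + ‖x‖)) →
    ∀ (Ω : Type) (_ : MeasurableSpace Ω) (P : Measure Ω), IsProbabilityMeasure P →
    ∀ Z : Ω → Euc q, Measurable Z → Integrable Z P → (∫ ω, Z ω ∂P) = 0 →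
      Integrable (fun ω => ‖Z ω‖ ^ r) P → (∫ ω, ‖Z ω‖ ^ r ∂P) ≤ m →
    ∀ x : Euc d,
      ∫ ω, ‖x + Δ • b t x + Real.sqrt Δ • (σ t x) (Z ω)‖ ^ r ∂P
        ≤ Real.exp (Δ * ((r * L + (r - 1) * 2 ^ (r - 2) + c₁ r)
              + 2 ^ (r - 1) * L ^ r * c₂ r Δmax * m))
            * ‖x‖ ^ r
          + Δ * (2 ^ (r - 1) * L ^ r * c₂ r Δmax * m
              + 2 ^ (r - 2) * L ^ r * (1 + r * Δmax ^ (r - 1)) * (1 + c₁ r * Δmax)) := by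
  intro Δ hΔ t b σ hgrowth Ω _ P _ Z _ hZ hmean hZr hZm x
  have hb : ‖b t x‖ ≤ L * (1 + ‖x‖) := (le_add_of_nonneg_right (norm_nonneg _)).trans (hgrowth t x)
  have hσ : ‖σ t x‖ ≤ L * (1 + ‖x‖) := (le_add_of_nonneg_left (norm_nonneg _)).trans (hgrowth t x)
  exact euler_one_step_moment_bound_general hr hΔ.1.le hΔ.2.le hb hσ hZ hmean hZr hZm
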